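/- Let N be a finite set and f : 2^N → ℝ a submodular set function with f(∅) = 0. Let x̄ ∈ ℝ^N with x̄ ≥ 0 and let e_1, …, e_n be an enumeration of N with x̄_{e_1} ≥ x̄_{e_2} ≥ … ≥ x̄_{e_n}. Define the greedy vector π̄ by π̄_{e_i} = f(S_i) − f(S_{i−1}) where S_0 = ∅ and S_i = {e_1, …, e_i}. Then π·x̄ ≤ π̄·x̄ for every π ∈ P_f, i.e., the greedy vector maximizes the linear function π ↦ π·x̄ over P_f. (Edmonds' greedy optimality, used in Remark 2.) -/

import Mathlib

/-!
Fix `π ∈ P_f` and let `g k = f (S_k) - π (S_k)` be the slack of the `k`-th prefix constraint.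
Then `g ≥ 0`, `g 0 = 0`, and `π̄ (e i) - π (e i) = g (i + 1) - g i`, so `(π̄ - π) · x̄` is the sum of
the increments of `g` weighted by the nonincreasing nonnegative numbers `x̄ (e i)`. Abel summation
(`mul_le_sum_increments_mul`) shows that this sum is nonnegative.
-/

/-- `prefixSet e k` is the set `S_k = {e_1, …, e_k}` of the first `k` elements of the
enumeration `e` of the ground set. -/
def prefixSet {α : Type*} [DecidableEq α] {n : ℕ} (e : Fin n ≃ α) (k : ℕ) : Finset α :=
  (Finset.univ.filter (fun j : Fin n => (j : ℕ) < k)).image e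

/-- Abel summation with nonnegative partial sums `g`: if `x` is nonincreasing and bounded below
by `c`, the weighted sum of the increments of `g` is at least `c` times the total. A free lower
bound `c`, rather than `0`, makes the induction on `n` go through. -/
lemma mul_le_sum_increments_mul (g : ℕ → ℝ) (hg0 : g 0 = 0) (hg : ∀ k, 0 ≤ g k) :
    ∀ (n : ℕ) (x : Fin n → ℝ) (c : ℝ), Antitone x → (∀ i, c ≤ x i) →
      g n * c ≤ ∑ i : Fin n, (g ((i : ℕ) + 1) - g i) * x i := by
  intro n
  induction n with
  | zero => intro x c _ _; simp [hg0]
  | succ n ih =>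
    intro x c hx hc
    have h1 := ih (fun i => x i.castSucc) (x (Fin.last n))
      (fun i j hij => hx (Fin.castSucc_le_castSucc_iff.mpr hij)) (fun i => hx (Fin.le_last _))
    have h2 := mul_le_mul_of_nonneg_left (hc (Fin.last n)) (hg (n + 1))
    rw [Fin.sum_univ_castSucc]
    simp only [Fin.val_castSucc, Fin.val_last]
    linarith

lemma prefixSet_zero {α : Type*} [DecidableEq α] {n : ℕ} (e : Fin n ≃ α) :
    prefixSet e 0 = ∅ := by
  simp [prefixSet]

lemma sum_prefixSet_succ {α : Type*} [DecidableEq α] {n : ℕ} (e : Fin n ≃ α) (π : α → ℝ)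
    (i : Fin n) :
    ∑ a ∈ prefixSet e ((i : ℕ) + 1), π a = π (e i) + ∑ a ∈ prefixSet e (i : ℕ), π a := by
  have hins : prefixSet e ((i : ℕ) + 1) = insert (e i) (prefixSet e (i : ℕ)) := by
    simp only [prefixSet, ← Finset.image_insert]
    congr 1
    ext j
    simp only [Finset.mem_filter, Finset.mem_univ, true_and, Finset.mem_insert, Fin.ext_iff]
    omega
  rw [hins, Finset.sum_insert]
  simp [prefixSet]

/-- Edmonds' greedy optimality. For submodular `f` with `f ∅ = 0`, a
nonnegative vector `x̄` sorted nonincreasingly along the enumeration `e`, the greedy vector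
`π̄` maximizes `π ↦ π·x̄` over `P_f`. -/
theorem greedy_vector_maximizes_over_Pf
    {α : Type*} [Fintype α] [DecidableEq α]
    (f : Finset α → ℝ) (hf : f ∅ = 0)
    (hsub : ∀ S T : Finset α, f (S ∪ T) + f (S ∩ T) ≤ f S + f T)
    (xbar : α → ℝ) (hxbar : ∀ i, 0 ≤ xbar i)
    (e : Fin (Fintype.card α) ≃ α)
    (hsort : ∀ i j : Fin (Fintype.card α), i ≤ j → xbar (e j) ≤ xbar (e i))
    (πbar : α → ℝ)
    (hπbar : ∀ i : Fin (Fintype.card α),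
      πbar (e i) = f (prefixSet e ((i : ℕ) + 1)) - f (prefixSet e (i : ℕ))) :
    ∀ π : α → ℝ, (∀ S : Finset α, ∑ i ∈ S, π i ≤ f S) →
      ∑ i, π i * xbar i ≤ ∑ i, πbar i * xbar i := by
  intro π hπ
  have key := mul_le_sum_increments_mul
    (fun k => f (prefixSet e k) - ∑ a ∈ prefixSet e k, π a)
    (by simp [prefixSet_zero, hf]) (fun k => sub_nonneg.mpr (hπ _))
    _ (fun i => xbar (e i)) 0 (fun i j hij => hsort i j hij) (fun i => hxbar _)
  rw [← Equiv.sum_comp e, ← Equiv.sum_comp e (fun i => πbar i * xbar i), ← sub_nonneg,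
    ← Finset.sum_sub_distrib]
  rw [mul_zero] at key
  refine key.trans_eq (Finset.sum_congr rfl fun i _ => ?_)
  rw [sum_prefixSet_succ, hπbar]
  ring
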